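/- Let 𝒦 be an abelian category with enough injective objects and let 𝒯 be a class of objects of 𝒦. Put ℬ = 𝒯^{⊥≥1}. Then: (a) ^{⊥₁}ℬ = ^{⊥≥1}ℬ; (b) if the class 𝒜 = ^{⊥₁}ℬ is generating in 𝒦, then (𝒜,ℬ) is a hereditary cotorsion pair in 𝒦. -/

import Mathlib

/-!
STATEMENT 9: Let 𝒦 be an abelian category with enough injectives and 𝒯 a class
of objects; put ℬ = 𝒯^{⊥≥1}. Then (a) ^{⊥₁}ℬ = ^{⊥≥1}ℬ; (b) if 𝒜 = ^{⊥₁}ℬ is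
generating, then (𝒜, ℬ) is a hereditary cotorsion pair.
-/

open CategoryTheory Limits

universe w v u

namespace Stmt9

variable {C : Type u} [Category.{v} C] [Abelian C] [HasExt.{w} C]

/-- `𝒯^{⊥≥1}`: objects `X` with `Extⁿ(T, X) = 0` for all `T ∈ 𝒯`, `n ≥ 1`. -/
def rightPerpAll (T : Set C) : Set C :=
  {X | ∀ t ∈ T, ∀ n : ℕ, 1 ≤ n → Subsingleton (Abelian.Ext t X n)}

/-- `𝒜^{⊥₁}`: objects `X` with `Ext¹(A, X) = 0` for all `A ∈ 𝒜`. -/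
def rightPerpOne (A : Set C) : Set C :=
  {X | ∀ a ∈ A, Subsingleton (Abelian.Ext a X 1)}

/-- `^{⊥₁}ℬ`: objects `Y` with `Ext¹(Y, B) = 0` for all `B ∈ ℬ`. -/
def leftPerpOne (B : Set C) : Set C :=
  {Y | ∀ b ∈ B, Subsingleton (Abelian.Ext Y b 1)}

/-- `^{⊥≥1}ℬ`: objects `Y` with `Extⁿ(Y, B) = 0` for all `B ∈ ℬ`, `n ≥ 1`. -/
def leftPerpAll (B : Set C) : Set C :=
  {Y | ∀ b ∈ B, ∀ n : ℕ, 1 ≤ n → Subsingleton (Abelian.Ext Y b n)}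

/-- A class `𝒜` is generating if every object is a quotient of an object
of `𝒜`. -/
def Generating (A : Set C) : Prop :=
  ∀ X : C, ∃ (a : C) (_ : a ∈ A) (p : a ⟶ X), Epi p

/-- Every object embeds in a short exact sequence with injective middle term. -/
lemma exists_inj_ses {C : Type u} [Category.{v} C] [Abelian C] [EnoughInjectives C] (X : C) :
    ∃ (I Q : C) (f : X ⟶ I) (g : I ⟶ Q) (w : f ≫ g = 0), Injective I ∧
      (ShortComplex.mk f g w).ShortExact := by
  refine ⟨Injective.under X, cokernel (Injective.ι X), Injective.ι X, cokernel.π _,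
    cokernel.condition _, inferInstance, ?_⟩
  exact { exact := ShortComplex.exact_of_g_is_cokernel _ (cokernelIsCokernel _)
          mono_f := by dsimp; infer_instance
          epi_g := by dsimp; infer_instance }

/-- Dimension shifting along an embedding in an injective. -/
lemma exists_shift {C : Type u} [Category.{v} C] [Abelian C] [HasExt.{w} C] {X I Q : C}
    {f : X ⟶ I} {g : I ⟶ Q} {z : f ≫ g = 0} [Injective I]
    (h : (ShortComplex.mk f g z).ShortExact) {Y : C} {n : ℕ} (x : Abelian.Ext.{w} Y X (n + 1)) :
    ∃ y : Abelian.Ext.{w} Y Q n, y.comp h.extClass rfl = x :=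
  Abelian.Ext.covariant_sequence_exact₁ _ h x (Abelian.Ext.eq_zero_of_injective (I := I) _) rfl

lemma cosyzygy_mem {C : Type u} [Category.{v} C] [Abelian C] [HasExt.{w} C] {X I Q : C}
    {f : X ⟶ I} {g : I ⟶ Q} {z : f ≫ g = 0} [Injective I]
    (h : (ShortComplex.mk f g z).ShortExact) (T : Set C) (hX : X ∈ rightPerpAll.{w} T) :
    Q ∈ rightPerpAll.{w} T := by
  intro t ht n hn
  obtain ⟨m, rfl⟩ : ∃ m, n = m + 1 := ⟨n - 1, by omega⟩
  refine subsingleton_of_forall_eq 0 fun x => ?_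
  have := hX t ht (m + 1 + 1) (by omega)
  obtain ⟨y, hy⟩ := Abelian.Ext.covariant_sequence_exact₃ t h x rfl (Subsingleton.elim _ _)
  rw [← hy, Abelian.Ext.eq_zero_of_injective (I := I) y, Abelian.Ext.zero_comp]

lemma left_all {C : Type u} [Category.{v} C] [Abelian C] [EnoughInjectives C]
    [HasExt.{w} C] (T : Set C) (Y : C) (hY : Y ∈ leftPerpOne.{w} (rightPerpAll.{w} T)) (n : ℕ) :
    ∀ b ∈ rightPerpAll.{w} T, Subsingleton (Abelian.Ext.{w} Y b (n + 1)) := by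
  induction n with
  | zero => exact hY
  | succ n ih =>
    intro b hb
    obtain ⟨I, Q, f, g, z, hI, h⟩ := exists_inj_ses b
    have := ih Q (cosyzygy_mem h T hb)
    refine subsingleton_of_forall_eq 0 fun x => ?_
    obtain ⟨y, rfl⟩ := exists_shift h x
    rw [Subsingleton.elim y 0, Abelian.Ext.zero_comp]

/-- Positive degree extension classes vanish after pulling back along some epimorphism. -/
lemma exists_efface {C : Type u} [Category.{v} C] [Abelian C] [EnoughInjectives C]
    [HasExt.{w} C] (A : C) (n : ℕ) : ∀ (X : C) (x : Abelian.Ext.{w} A X (n + 1)),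
    ∃ (Z : C) (p : Z ⟶ A), Epi p ∧ (Abelian.Ext.mk₀ p).comp x (zero_add _) = 0 := by
  induction n with
  | zero =>
    intro X x
    obtain ⟨I, Q, f, g, z, hI, h⟩ := exists_inj_ses X
    obtain ⟨y, rfl⟩ := exists_shift h x
    obtain ⟨φ, rfl⟩ := (Abelian.Ext.mk₀_bijective _ _).2 y
    have : Epi g := h.epi_g
    refine ⟨pullback φ g, pullback.fst φ g, inferInstance, ?_⟩
    rw [Abelian.Ext.mk₀_comp_mk₀_assoc, pullback.condition, ← Abelian.Ext.mk₀_comp_mk₀_assoc]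
    have e := h.comp_extClass
    dsimp at e
    rw [e, Abelian.Ext.comp_zero]
  | succ n ih =>
    intro X x
    obtain ⟨I, Q, f, g, z, hI, h⟩ := exists_inj_ses X
    obtain ⟨y, rfl⟩ := exists_shift h x
    obtain ⟨Z, p, hp, hy⟩ := ih Q y
    refine ⟨Z, p, hp, ?_⟩
    rw [← Abelian.Ext.comp_assoc _ _ _ (zero_add _) rfl (by omega), hy, Abelian.Ext.zero_comp]

lemma right_all {C : Type u} [Category.{v} C] [Abelian C] [EnoughInjectives C]
    [HasExt.{w} C] (T : Set C) (hG : Generating (leftPerpOne.{w} (rightPerpAll.{w} T)))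
    (X : C) (hX : X ∈ rightPerpOne.{w} (leftPerpOne.{w} (rightPerpAll.{w} T))) (n : ℕ) :
    ∀ a ∈ leftPerpOne.{w} (rightPerpAll.{w} T), Subsingleton (Abelian.Ext.{w} a X (n + 1)) := by
  induction n with
  | zero => exact hX
  | succ n ih =>
    intro a ha
    refine subsingleton_of_forall_eq 0 fun x => ?_
    obtain ⟨Z, p, hp, hx⟩ := exists_efface a (n + 1) X x
    obtain ⟨a', ha', q, hq⟩ := hG Z
    have h : (ShortComplex.mk (kernel.ι (q ≫ p)) (q ≫ p) (kernel.condition _)).ShortExact :=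
      { exact := ShortComplex.exact_of_f_is_kernel _ (kernelIsKernel _)
        mono_f := by dsimp; infer_instance
        epi_g := by dsimp; infer_instance }
    have hK : kernel (q ≫ p) ∈ leftPerpOne.{w} (rightPerpAll.{w} T) := by
      intro b hb
      refine subsingleton_of_forall_eq 0 fun y => ?_
      have h2 : Subsingleton (Abelian.Ext.{w} a b 2) := left_all T a ha 1 b hb
      have h1 : Subsingleton (Abelian.Ext.{w} a' b 1) := ha' b hb
      obtain ⟨u, hu⟩ := Abelian.Ext.contravariant_sequence_exact₁ h b y (n₁ := 2) rfl
        (h2.elim _ _)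
      rw [← hu, h1.elim u 0, Abelian.Ext.comp_zero]
    have hS := ih _ hK
    obtain ⟨u, hu⟩ := Abelian.Ext.contravariant_sequence_exact₃ h X x (by
      dsimp
      rw [← Abelian.Ext.mk₀_comp_mk₀_assoc, hx, Abelian.Ext.comp_zero]) (n₀ := n + 1) (by omega)
    rw [← hu, hS.elim u 0, Abelian.Ext.comp_zero]

/-- with `ℬ = 𝒯^{⊥≥1}`:
(a) `^{⊥₁}ℬ = ^{⊥≥1}ℬ`;
(b) if `𝒜 = ^{⊥₁}ℬ` is generating, then `(𝒜, ℬ)` is a hereditary cotorsion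
pair: `ℬ = 𝒜^{⊥₁}` (and `𝒜 = ^{⊥₁}ℬ` holds by definition), and
`Ext²(A, B) = 0` for all `A ∈ 𝒜`, `B ∈ ℬ`. -/
theorem hereditary_cotorsion_pair
    (C : Type u) [Category.{v} C] [Abelian C] [EnoughInjectives C]
    [HasExt.{w} C] (T : Set C) :
    leftPerpOne.{w} (rightPerpAll.{w} T) = leftPerpAll.{w} (rightPerpAll.{w} T) ∧
    (Generating (leftPerpOne.{w} (rightPerpAll.{w} T)) →
      rightPerpAll.{w} T = rightPerpOne.{w} (leftPerpOne.{w} (rightPerpAll.{w} T)) ∧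
      ∀ a ∈ leftPerpOne.{w} (rightPerpAll.{w} T), ∀ b ∈ rightPerpAll.{w} T,
        Subsingleton (Abelian.Ext a b 2)) := by
  refine ⟨Set.Subset.antisymm ?_ ?_, fun hG => ⟨Set.Subset.antisymm ?_ ?_, ?_⟩⟩
  · intro Y hY b hb n hn
    obtain ⟨m, rfl⟩ : ∃ m, n = m + 1 := ⟨n - 1, by omega⟩
    exact left_all T Y hY m b hb
  · intro Y hY b hb
    exact hY b hb 1 le_rfl
  · intro b hb a ha
    exact ha b hb
  · intro X hX t ht n hn
    obtain ⟨m, rfl⟩ : ∃ m, n = m + 1 := ⟨n - 1, by omega⟩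
    exact right_all T hG X hX m t fun b hb => hb t ht 1 le_rfl
  · intro a ha b hb
    exact left_all T a ha 1 b hb

end Stmt9
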